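/- arXiv:2208.11447 — 5 statements merged into one kernel-verified Lean document; each statement's English description precedes it below -/
import Mathlib

section
/- Let A ∈ ℂ^{N×N}, b ∈ ℂᴺ, let ε ∈ [0,1), and let S ∈ ℂ^{s×N} be an ε-subspace embedding for the Krylov space 𝒦_{m+1}(A,b). Let V ∈ ℂ^{N×m} have full column rank with range(V) = 𝒦_m(A,b), b ∈ range(V), and suppose the whitening condition (SV)ᴴSV = I_m holds. Let μ be a nonnegative Borel measure on [0,∞), set H := (VᴴV)⁻¹VᴴAV and Ĥ := VᴴSᴴSAV, assume tI+H and tI+Ĥ are invertible for μ-almost every t ≥ 0 and that t ↦ (tI+H)⁻¹ and t ↦ (tI+Ĥ)⁻¹ are μ-Bochner integrable, and define f(M) := ∫₀^∞ (tI+M)⁻¹ dμ(t) for M ∈ {H, Ĥ}. Then the FOM approximant f_m := V f(H) (VᴴV)⁻¹Vᴴ b and the sketched FOM approximant f̂_m := V f(Ĥ) VᴴSᴴS b satisfy ‖f_m − f̂_m‖ ≤ √((1+ε)/(1−ε)) · ‖b‖ · ‖f(H) − f(Ĥ)‖, where the last norm is the spectral norm. -/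
open Matrix MeasureTheory

noncomputable section

/-- `E n` is the Euclidean space `ℂⁿ`. -/
abbrev E (n : ℕ) : Type := EuclideanSpace ℂ (Fin n)

/-- Action of a (rectangular) matrix on a Euclidean vector. -/
def mulE {p q : ℕ} (M : Matrix (Fin p) (Fin q) ℂ) (v : E q) : E p :=
  Matrix.toEuclideanLin M v

/-- Spectral (operator 2-) norm of a (rectangular) matrix. -/
def opNorm {p q : ℕ} (M : Matrix (Fin p) (Fin q) ℂ) : ℝ :=
  ‖LinearMap.toContinuousLinearMap (Matrix.toEuclideanLin M)‖

/-- The `m`-th Krylov space `𝒦_m(A,b) = span{b, Ab, …, A^{m-1}b}`. -/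
def Krylov {N : ℕ} (A : Matrix (Fin N) (Fin N) ℂ) (b : E N) (m : ℕ) :
    Submodule ℂ (E N) :=
  Submodule.span ℂ {v | ∃ j < m, v = mulE (A ^ j) b}

/-- `S` is an `ε`-subspace embedding for the subspace `𝒱`. -/
def IsSubspaceEmbedding {s N : ℕ} (S : Matrix (Fin s) (Fin N) ℂ) (ε : ℝ)
    (𝒱 : Submodule ℂ (E N)) : Prop :=
  ∀ v ∈ 𝒱, (1 - ε) * ‖v‖ ^ 2 ≤ ‖mulE S v‖ ^ 2 ∧ ‖mulE S v‖ ^ 2 ≤ (1 + ε) * ‖v‖ ^ 2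

/-- A matrix is positive real if `Re(vᴴAv) > 0` for all nonzero `v`. -/
def IsPositiveReal {N : ℕ} (A : Matrix (Fin N) (Fin N) ℂ) : Prop :=
  ∀ v : E N, v ≠ 0 → 0 < (inner ℂ v (mulE A v) : ℂ).re

attribute [local instance] Matrix.frobeniusNormedAddCommGroup Matrix.frobeniusNormedSpace

/-! For `b = V c` one has `V† b = c`, and whitening gives `Vᴴ Sᴴ S b = c`, so the two approximants
differ by `V (f(H) - f(Ĥ)) c`. Whitening also makes `S V` an isometry, while `S` distorts norms on
`range V` by at most the factors `√(1 ± ε)`. Hence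
`√(1 - ε) ‖V (f(H) - f(Ĥ)) c‖ ≤ ‖(f(H) - f(Ĥ)) c‖` and `‖c‖ = ‖S b‖ ≤ √(1 + ε) ‖b‖`. -/

theorem mulVec_injective_of_mul_eq_one {R m n : Type*} [Semiring R] [Fintype m] [Fintype n]
    [DecidableEq n] {L : Matrix n m R} {V : Matrix m n R} (h : L * V = 1) :
    Function.Injective V.mulVec :=
  Function.LeftInverse.injective (g := L.mulVec) fun x => by
    rw [mulVec_mulVec, h, one_mulVec]

theorem isUnit_conjTranspose_mul_self {K m n : Type*} [Field K] [PartialOrder K] [StarRing K]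
    [StarOrderedRing K] [Fintype m] [Fintype n] [DecidableEq n] {V : Matrix m n K}
    (hV : Function.Injective V.mulVec) : IsUnit (Vᴴ * V) := by
  rw [← mulVec_injective_iff_isUnit, ← coe_mulVecLin, ← LinearMap.ker_eq_bot,
    ker_mulVecLin_conjTranspose_mul_self]
  exact LinearMap.ker_eq_bot.mpr hV

theorem gram_inv_mul_conjTranspose_mul_self {K m n : Type*} [Field K] [PartialOrder K] [StarRing K]
    [StarOrderedRing K] [Fintype m] [Fintype n] [DecidableEq n] {V : Matrix m n K}
    (hV : Function.Injective V.mulVec) : (Vᴴ * V)⁻¹ * Vᴴ * V = 1 := by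
  rw [Matrix.mul_assoc]
  exact nonsing_inv_mul _ ((isUnit_iff_isUnit_det _).mp (isUnit_conjTranspose_mul_self hV))

theorem norm_toEuclideanLin_of_conjTranspose_mul_self_eq_one {𝕜 m n : Type*} [RCLike 𝕜]
    [Fintype m] [Fintype n] [DecidableEq n] {W : Matrix m n 𝕜} (hW : Wᴴ * W = 1)
    (v : EuclideanSpace 𝕜 n) : ‖toEuclideanLin W v‖ = ‖v‖ := by
  classical
  have adjoint_comp : (toEuclideanLin W).adjoint ∘ₗ toEuclideanLin W = LinearMap.id := by
    rw [← toEuclideanLin_conjTranspose_eq_adjoint, ← toLpLin_mul_same, hW, toLpLin_one]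
  refine (LinearMap.norm_map_iff_inner_map_map (toEuclideanLin W)).mpr (fun x y => ?_) v
  rw [← LinearMap.adjoint_inner_right, ← LinearMap.comp_apply, adjoint_comp, LinearMap.id_apply]

section mulE

variable {p q r : ℕ}

theorem mulE_mul (M : Matrix (Fin p) (Fin q) ℂ) (K : Matrix (Fin q) (Fin r) ℂ) (v : E r) :
    mulE (M * K) v = mulE M (mulE K v) :=
  LinearMap.congr_fun (toLpLin_mul_same 2 M K) v

theorem mulE_sub (M : Matrix (Fin p) (Fin q) ℂ) (v w : E q) :
    mulE M (v - w) = mulE M v - mulE M w :=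
  map_sub (toEuclideanLin M) v w

theorem sub_mulE (M K : Matrix (Fin p) (Fin q) ℂ) (v : E q) :
    mulE (M - K) v = mulE M v - mulE K v :=
  LinearMap.congr_fun (map_sub toEuclideanLin M K) v

theorem norm_mulE_le_opNorm_mul_norm (M : Matrix (Fin p) (Fin q) ℂ) (v : E q) :
    ‖mulE M v‖ ≤ opNorm M * ‖v‖ :=
  (LinearMap.toContinuousLinearMap (toEuclideanLin M)).le_opNorm v

theorem opNorm_nonneg (M : Matrix (Fin p) (Fin q) ℂ) : 0 ≤ opNorm M :=
  norm_nonneg _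

end mulE

theorem krylov_mono {N : ℕ} (A : Matrix (Fin N) (Fin N) ℂ) (b : E N) : Monotone (Krylov A b) :=
  fun _ _ hkl => Submodule.span_mono fun _ ⟨j, hj, hv⟩ => ⟨j, hj.trans_le hkl, hv⟩

namespace IsSubspaceEmbedding

variable {s N : ℕ} {S : Matrix (Fin s) (Fin N) ℂ} {ε : ℝ} {𝒱 𝒲 : Submodule ℂ (E N)}

theorem mono (hS : IsSubspaceEmbedding S ε 𝒲) (h : 𝒱 ≤ 𝒲) : IsSubspaceEmbedding S ε 𝒱 :=
  fun v hv => hS v (h hv)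

theorem sqrt_one_sub_mul_norm_le_norm_mulE (hS : IsSubspaceEmbedding S ε 𝒱) {v : E N} (hv : v ∈ 𝒱) :
    √(1 - ε) * ‖v‖ ≤ ‖mulE S v‖ := by
  have h := Real.sqrt_le_sqrt (hS v hv).1
  rwa [Real.sqrt_mul' _ (sq_nonneg _), Real.sqrt_sq (norm_nonneg _),
    Real.sqrt_sq (norm_nonneg _)] at h

theorem norm_mulE_le_sqrt_one_add_mul_norm (hS : IsSubspaceEmbedding S ε 𝒱) {v : E N} (hv : v ∈ 𝒱) :
    ‖mulE S v‖ ≤ √(1 + ε) * ‖v‖ := by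
  have h := Real.sqrt_le_sqrt (hS v hv).2
  rwa [Real.sqrt_mul' _ (sq_nonneg _), Real.sqrt_sq (norm_nonneg _),
    Real.sqrt_sq (norm_nonneg _)] at h

end IsSubspaceEmbedding

section Approximants

variable {N s m : ℕ}

/-- The FOM approximant `V F V† b` to `f(A) b`, with `V† = (VᴴV)⁻¹Vᴴ` and `F` in the role of `f(H)`.
The formula for `V†` is only meaningful when `V` has full column rank. -/
def fomApproximant (V : Matrix (Fin N) (Fin m) ℂ) (F : Matrix (Fin m) (Fin m) ℂ) (b : E N) : E N :=
  mulE (V * F * (Vᴴ * V)⁻¹ * Vᴴ) b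

/-- The sketched FOM approximant `V G (SV)ᴴ S b` to `f(A) b`, with `G` in the role of `f(Ĥ)`.
The whitening condition, under which `(SV)ᴴ = (SV)†`, is not part of the definition. -/
def sketchedFomApproximant (S : Matrix (Fin s) (Fin N) ℂ) (V : Matrix (Fin N) (Fin m) ℂ)
    (G : Matrix (Fin m) (Fin m) ℂ) (b : E N) : E N :=
  mulE (V * G * Vᴴ * Sᴴ * S) b

variable {S : Matrix (Fin s) (Fin N) ℂ} {V : Matrix (Fin N) (Fin m) ℂ}

open scoped ComplexOrder in
theorem fomApproximant_mulE (hV : Function.Injective V.mulVec) (F : Matrix (Fin m) (Fin m) ℂ)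
    (c : E m) : fomApproximant V F (mulE V c) = mulE V (mulE F c) := by
  have cancel : V * F * (Vᴴ * V)⁻¹ * Vᴴ * V = V * F := by
    rw [Matrix.mul_assoc (V * F), Matrix.mul_assoc (V * F), gram_inv_mul_conjTranspose_mul_self hV,
      Matrix.mul_one]
  rw [fomApproximant, ← mulE_mul, cancel, mulE_mul]

theorem sketchedFomApproximant_mulE (hwhite : (S * V)ᴴ * (S * V) = 1)
    (G : Matrix (Fin m) (Fin m) ℂ) (c : E m) :
    sketchedFomApproximant S V G (mulE V c) = mulE V (mulE G c) := by
  have cancel : V * G * Vᴴ * Sᴴ * S * V = V * G := by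
    calc V * G * Vᴴ * Sᴴ * S * V = V * G * ((S * V)ᴴ * (S * V)) := by
          simp only [conjTranspose_mul, Matrix.mul_assoc]
      _ = V * G := by rw [hwhite, Matrix.mul_one]
  rw [sketchedFomApproximant, ← mulE_mul, cancel, mulE_mul]

theorem fomApproximant_sub_sketchedFomApproximant_mulE (hwhite : (S * V)ᴴ * (S * V) = 1)
    (F G : Matrix (Fin m) (Fin m) ℂ) (c : E m) :
    fomApproximant V F (mulE V c) - sketchedFomApproximant S V G (mulE V c)
      = mulE V (mulE (F - G) c) := by
  have hV : Function.Injective V.mulVec :=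
    mulVec_injective_of_mul_eq_one (L := (S * V)ᴴ * S) (by rw [Matrix.mul_assoc, hwhite])
  rw [fomApproximant_mulE hV, sketchedFomApproximant_mulE hwhite, ← mulE_sub, ← sub_mulE]

theorem norm_mulE_mulE_of_whitened (hwhite : (S * V)ᴴ * (S * V) = 1) (c : E m) :
    ‖mulE S (mulE V c)‖ = ‖c‖ := by
  rw [← mulE_mul]
  exact norm_toEuclideanLin_of_conjTranspose_mul_self_eq_one hwhite c

end Approximants

theorem sketched_fAb_stmt1_general {N s m : ℕ} {ε : ℝ} (hε1 : ε < 1)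
    {S : Matrix (Fin s) (Fin N) ℂ} {V : Matrix (Fin N) (Fin m) ℂ}
    (hS : IsSubspaceEmbedding S ε (LinearMap.range (Matrix.toEuclideanLin V)))
    (hwhite : (S * V)ᴴ * (S * V) = 1) (F G : Matrix (Fin m) (Fin m) ℂ) {b : E N}
    (hb : b ∈ LinearMap.range (Matrix.toEuclideanLin V)) :
    ‖fomApproximant V F b - sketchedFomApproximant S V G b‖
      ≤ √((1 + ε) / (1 - ε)) * ‖b‖ * opNorm (F - G) := by
  obtain ⟨c, rfl⟩ := hb
  change ‖fomApproximant V F (mulE V c) - sketchedFomApproximant S V G (mulE V c)‖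
    ≤ √((1 + ε) / (1 - ε)) * ‖mulE V c‖ * opNorm (F - G)
  set d := mulE (F - G) c
  have norm_error : √(1 - ε) * ‖mulE V d‖ ≤ ‖d‖ :=
    (hS.sqrt_one_sub_mul_norm_le_norm_mulE ⟨d, rfl⟩).trans_eq (norm_mulE_mulE_of_whitened hwhite d)
  have norm_coord : ‖c‖ ≤ √(1 + ε) * ‖mulE V c‖ :=
    (norm_mulE_mulE_of_whitened hwhite c).symm.trans_le
      (hS.norm_mulE_le_sqrt_one_add_mul_norm ⟨c, rfl⟩)
  have sqrt_pos : 0 < √(1 - ε) := Real.sqrt_pos.mpr (sub_pos.mpr hε1)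
  rw [fomApproximant_sub_sketchedFomApproximant_mulE hwhite, Real.sqrt_div' _ (sub_pos.mpr hε1).le]
  calc ‖mulE V d‖ ≤ ‖d‖ / √(1 - ε) := (le_div_iff₀' sqrt_pos).mpr norm_error
    _ ≤ opNorm (F - G) * (√(1 + ε) * ‖mulE V c‖) / √(1 - ε) := by
        gcongr
        exact (norm_mulE_le_opNorm_mul_norm _ c).trans
          (mul_le_mul_of_nonneg_left norm_coord (opNorm_nonneg _))
    _ = √(1 + ε) / √(1 - ε) * ‖mulE V c‖ * opNorm (F - G) := by ring

/-- **Distance between FOM and sketched FOM** (Corollary 2.2): with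
`H = (VᴴV)⁻¹VᴴAV`, `Ĥ = VᴴSᴴSAV` and `f(M) = ∫₀^∞ (tI+M)⁻¹ dμ(t)`, the FOM
approximant `f_m = V f(H) (VᴴV)⁻¹Vᴴ b` and the sketched FOM approximant
`f̂_m = V f(Ĥ) VᴴSᴴS b` satisfy
`‖f_m − f̂_m‖ ≤ √((1+ε)/(1−ε)) ‖b‖ ‖f(H) − f(Ĥ)‖`. -/
theorem sketched_fAb_stmt1 {N s m : ℕ} (A : Matrix (Fin N) (Fin N) ℂ) (b : E N)
    (ε : ℝ) (hε0 : 0 ≤ ε) (hε1 : ε < 1)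
    (S : Matrix (Fin s) (Fin N) ℂ)
    (hS : IsSubspaceEmbedding S ε (Krylov A b (m + 1)))
    (V : Matrix (Fin N) (Fin m) ℂ)
    (hV : Function.Injective (Matrix.toEuclideanLin V))
    (hrange : LinearMap.range (Matrix.toEuclideanLin V) = Krylov A b m)
    (hb : b ∈ LinearMap.range (Matrix.toEuclideanLin V))
    (hwhite : (S * V)ᴴ * (S * V) = (1 : Matrix (Fin m) (Fin m) ℂ))
    (μ : MeasureTheory.Measure ℝ)
    (hinv : ∀ᵐ (t : ℝ) ∂(μ.restrict (Set.Ici (0 : ℝ))),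
      IsUnit ((t : ℂ) • (1 : Matrix (Fin m) (Fin m) ℂ) + (Vᴴ * V)⁻¹ * Vᴴ * A * V)
      ∧ IsUnit ((t : ℂ) • (1 : Matrix (Fin m) (Fin m) ℂ) + Vᴴ * Sᴴ * S * A * V))
    (hintH : @MeasureTheory.IntegrableOn ℝ (Matrix (Fin m) (Fin m) ℂ) _
      PseudoMetricSpace.toUniformSpace.toTopologicalSpace _
      (fun t : ℝ =>
        ((t : ℂ) • (1 : Matrix (Fin m) (Fin m) ℂ) + (Vᴴ * V)⁻¹ * Vᴴ * A * V)⁻¹)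
      (Set.Ici (0 : ℝ)) μ)
    (hintHhat : @MeasureTheory.IntegrableOn ℝ (Matrix (Fin m) (Fin m) ℂ) _
      PseudoMetricSpace.toUniformSpace.toTopologicalSpace _
      (fun t : ℝ =>
        ((t : ℂ) • (1 : Matrix (Fin m) (Fin m) ℂ) + Vᴴ * Sᴴ * S * A * V)⁻¹)
      (Set.Ici (0 : ℝ)) μ) :
    ‖mulE (V * (∫ t in Set.Ici (0 : ℝ),
            ((t : ℂ) • (1 : Matrix (Fin m) (Fin m) ℂ) + (Vᴴ * V)⁻¹ * Vᴴ * A * V)⁻¹ ∂μ)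
          * (Vᴴ * V)⁻¹ * Vᴴ) b
        - mulE (V * (∫ t in Set.Ici (0 : ℝ),
            ((t : ℂ) • (1 : Matrix (Fin m) (Fin m) ℂ) + Vᴴ * Sᴴ * S * A * V)⁻¹ ∂μ)
          * Vᴴ * Sᴴ * S) b‖
      ≤ Real.sqrt ((1 + ε) / (1 - ε)) * ‖b‖
          * opNorm ((∫ t in Set.Ici (0 : ℝ),
              ((t : ℂ) • (1 : Matrix (Fin m) (Fin m) ℂ) + (Vᴴ * V)⁻¹ * Vᴴ * A * V)⁻¹ ∂μ)
            - ∫ t in Set.Ici (0 : ℝ),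
              ((t : ℂ) • (1 : Matrix (Fin m) (Fin m) ℂ) + Vᴴ * Sᴴ * S * A * V)⁻¹ ∂μ) :=
  sketched_fAb_stmt1_general hε1 (hS.mono (hrange.le.trans (krylov_mono A b m.le_succ)))
    hwhite _ _ hb
end
end

section
/- Let A ∈ ℂ^{N×N} be positive real and set ρ := min{Re(vᴴA⁻¹v) : ‖v‖ = 1}. Then for all v ∈ ℂᴺ and all t ≥ 0, (‖A‖⁻²t² + 2ρt + 1) · ‖Av‖² ≤ ‖(A+tI)v‖². -/
open Matrix MeasureTheory

noncomputable section

/-! For `w = A v` and `B` a left inverse of `A`, the cross term of `‖A v + t v‖²` is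
`2 t Re⟪w, B w⟫`, bounded below by `2 t ρ ‖w‖²`, and `t² ‖v‖² ≥ t² ‖A‖⁻² ‖w‖²`.
A positive real matrix is injective, so `B = A⁻¹` is such an inverse. -/

section InnerProductSpace

variable {𝕜 F : Type*} [RCLike 𝕜] [SeminormedAddCommGroup F] [InnerProductSpace 𝕜 F]

theorem norm_add_ofReal_smul_sq (x y : F) (t : ℝ) :
    ‖x + (t : 𝕜) • y‖ ^ 2
      = ‖x‖ ^ 2 + 2 * t * RCLike.re (inner 𝕜 x y) + t ^ 2 * ‖y‖ ^ 2 := by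
  rw [norm_add_sq (𝕜 := 𝕜), inner_smul_right, RCLike.re_ofReal_mul, norm_smul,
    RCLike.norm_ofReal, mul_pow, sq_abs, mul_assoc]

theorem re_inner_ofReal_smul_map_ofReal_smul (B : F →ₗ[𝕜] F) (c : ℝ) (w : F) :
    RCLike.re (inner 𝕜 ((c : 𝕜) • w) (B ((c : 𝕜) • w)))
      = c ^ 2 * RCLike.re (inner 𝕜 w (B w)) := by
  rw [map_smul, inner_smul_left, inner_smul_right, RCLike.conj_ofReal,
    RCLike.re_ofReal_mul, RCLike.re_ofReal_mul, ← mul_assoc, ← sq]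

theorem mul_norm_sq_le_re_inner_map_of_norm_eq_one (B : F →ₗ[𝕜] F) {ρ : ℝ}
    (hρ : ∀ w : F, ‖w‖ = 1 → ρ ≤ RCLike.re (inner 𝕜 w (B w))) (w : F) :
    ρ * ‖w‖ ^ 2 ≤ RCLike.re (inner 𝕜 w (B w)) := by
  rcases (norm_nonneg w).eq_or_lt with hw | hw
  · have h_inner : inner 𝕜 w (B w) = 0 := inner_eq_zero_of_left _ hw.symm
    simp [h_inner, ← hw]
  · have h_unit : ‖((‖w‖⁻¹ : ℝ) : 𝕜) • w‖ = 1 := by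
      rw [norm_smul, RCLike.norm_ofReal, abs_of_pos (inv_pos.mpr hw), inv_mul_cancel₀ hw.ne']
    have h := hρ _ h_unit
    rwa [re_inner_ofReal_smul_map_ofReal_smul, inv_pow, le_inv_mul_iff₀ (pow_pos hw 2),
      mul_comm] at h

end InnerProductSpace

theorem inv_opNorm_sq_mul_norm_apply_sq_le {𝕜 F G : Type*} [NontriviallyNormedField 𝕜]
    [SeminormedAddCommGroup F] [NormedSpace 𝕜 F] [SeminormedAddCommGroup G] [NormedSpace 𝕜 G]
    (T : F →L[𝕜] G) (v : F) : (‖T‖ ^ 2)⁻¹ * ‖T v‖ ^ 2 ≤ ‖v‖ ^ 2 :=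
  inv_mul_le_of_le_mul₀ (sq_nonneg _) (sq_nonneg _) <| by
    rw [← mul_pow]
    gcongr
    exact T.le_opNorm v

theorem sketched_fAb_stmt2_general {𝕜 F : Type*} [RCLike 𝕜] [SeminormedAddCommGroup F]
    [InnerProductSpace 𝕜 F] (A : F →L[𝕜] F) (B : F →ₗ[𝕜] F) (hBA : Function.LeftInverse B A)
    {ρ : ℝ} (hρ : ∀ w : F, ‖w‖ = 1 → ρ ≤ RCLike.re (inner 𝕜 w (B w)))
    (v : F) {t : ℝ} (ht : 0 ≤ t) :
    ((‖A‖ ^ 2)⁻¹ * t ^ 2 + 2 * ρ * t + 1) * ‖A v‖ ^ 2 ≤ ‖A v + (t : 𝕜) • v‖ ^ 2 := by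
  have h_cross : ρ * ‖A v‖ ^ 2 ≤ RCLike.re (inner 𝕜 (A v) v) := by
    simpa only [hBA v] using mul_norm_sq_le_re_inner_map_of_norm_eq_one B hρ (A v)
  calc ((‖A‖ ^ 2)⁻¹ * t ^ 2 + 2 * ρ * t + 1) * ‖A v‖ ^ 2
      = ‖A v‖ ^ 2 + 2 * t * (ρ * ‖A v‖ ^ 2) + t ^ 2 * ((‖A‖ ^ 2)⁻¹ * ‖A v‖ ^ 2) := by ring
    _ ≤ ‖A v‖ ^ 2 + 2 * t * RCLike.re (inner 𝕜 (A v) v) + t ^ 2 * ‖v‖ ^ 2 := by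
      gcongr
      exact inv_opNorm_sq_mul_norm_apply_sq_le A v
    _ = ‖A v + (t : 𝕜) • v‖ ^ 2 := (norm_add_ofReal_smul_sq _ _ _).symm

section PositiveReal

variable {N : ℕ}

theorem mulE_add_smul_one (A : Matrix (Fin N) (Fin N) ℂ) (c : ℂ) (v : E N) :
    mulE (A + c • (1 : Matrix (Fin N) (Fin N) ℂ)) v = mulE A v + c • v := by
  simp [mulE]

theorem leftInverse_mulE_inv {A : Matrix (Fin N) (Fin N) ℂ} (hA : IsUnit A) :
    Function.LeftInverse (mulE A⁻¹) (mulE A) := by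
  intro v
  have h_det : IsUnit A.det := (isUnit_iff_isUnit_det A).mp hA
  simp [mulE, toLpLin_apply, mulVec_mulVec, nonsing_inv_mul A h_det]

theorem IsPositiveReal.isUnit {A : Matrix (Fin N) (Fin N) ℂ} (hA : IsPositiveReal A) :
    IsUnit A := by
  rw [← mulVec_injective_iff_isUnit, ← coe_mulVecLin, injective_iff_map_eq_zero]
  intro x hx
  by_contra hx0
  have h_pos := hA (WithLp.toLp 2 x) (mt (WithLp.toLp_eq_zero 2).mp hx0)
  have h_zero : mulE A (WithLp.toLp 2 x) = 0 := congrArg (WithLp.toLp 2) hx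
  rw [h_zero, inner_zero_right] at h_pos
  exact lt_irrefl 0 h_pos

end PositiveReal

/-- **Lemma (i)**: for a positive real matrix `A` with
`ρ = min{Re(vᴴA⁻¹v) : ‖v‖ = 1}`, every `v ∈ ℂᴺ` and `t ≥ 0` satisfy
`(‖A‖⁻²t² + 2ρt + 1)‖Av‖² ≤ ‖(A+tI)v‖²`. -/
theorem sketched_fAb_stmt2 {N : ℕ} (A : Matrix (Fin N) (Fin N) ℂ)
    (hA : IsPositiveReal A) (ρ : ℝ)
    (hρ : IsLeast {r : ℝ | ∃ v : E N, ‖v‖ = 1 ∧ r = (inner ℂ v (mulE A⁻¹ v) : ℂ).re} ρ)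
    (v : E N) (t : ℝ) (ht : 0 ≤ t) :
    (((opNorm A) ^ 2)⁻¹ * t ^ 2 + 2 * ρ * t + 1) * ‖mulE A v‖ ^ 2
      ≤ ‖mulE (A + (t : ℂ) • (1 : Matrix (Fin N) (Fin N) ℂ)) v‖ ^ 2 := by
  rw [mulE_add_smul_one]
  exact sketched_fAb_stmt2_general (toEuclideanLin A).toContinuousLinearMap (toEuclideanLin A⁻¹)
    (leftInverse_mulE_inv hA.isUnit) (fun w hw => hρ.2 ⟨w, hw, rfl⟩) v ht
end
end

section
/- Let A ∈ ℂ^{N×N}, V ∈ ℂ^{N×m}, v ∈ ℂᴺ, H ∈ ℂ^{m×m} and h ∈ ℂ satisfy the Arnoldi relation AV = VH + h·v·e_mᵀ, where e_m is the m-th standard basis vector of ℂ^m. Let S ∈ ℂ^{s×N} satisfy the whitening condition (SV)ᴴSV = I_m, and let b = β·V e₁ for some β ∈ ℂ. Then VᴴSᴴSAV = H + h·((SV)ᴴSv)·e_mᵀ and VᴴSᴴSb = β·e₁. In particular, the sketched Rayleigh quotient VᴴSᴴSAV equals the rank-one update Ĥ := H + h·x̂·e_mᵀ of H with x̂ = (SV)ᴴSv,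 and VᴴSᴴSb = β e₁. -/
open Matrix MeasureTheory

noncomputable section

/-- Outer product `u wᵀ` of two Euclidean vectors. -/
def outerE {p q : ℕ} (u : E p) (w : E q) : Matrix (Fin p) (Fin q) ℂ :=
  fun i j => u i * w j

section LeftInverse

variable {R n k : Type*} [Semiring R] [Fintype n] [Fintype k] [DecidableEq k]
  {W : Matrix k n R} {V : Matrix n k R}

theorem mul_mul_eq_add_mul_of_mul_eq_one {A : Matrix n n R} {H : Matrix k k R} {F : Matrix n k R}
    (hWV : W * V = 1) (hAV : A * V = V * H + F) : W * A * V = H + W * F := by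
  rw [Matrix.mul_assoc, hAV, Matrix.mul_add, ← Matrix.mul_assoc, hWV, Matrix.one_mul]

theorem mulVec_mulVec_of_mul_eq_one (hWV : W * V = 1) (x : k → R) : W *ᵥ (V *ᵥ x) = x := by
  rw [mulVec_mulVec, hWV, one_mulVec]

-- The sketched Rayleigh quotient is the case `W = Vᴴ * Sᴴ * S`.
theorem sketched_fAb_stmt7_general {K : Type*} [Monoid K] [DistribMulAction K R]
    [SMulCommClass K R R] {A : Matrix n n R} {H : Matrix k k R} {v b : n → R} {w x : k → R}
    {h β : K} (hWV : W * V = 1) (hAV : A * V = V * H + h • vecMulVec v w)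
    (hb : b = β • (V *ᵥ x)) :
    W * A * V = H + h • vecMulVec (W *ᵥ v) w ∧ W *ᵥ b = β • x := by
  constructor
  · rw [mul_mul_eq_add_mul_of_mul_eq_one hWV hAV, Matrix.mul_smul, mul_vecMulVec]
  · rw [hb, mulVec_smul, mulVec_mulVec_of_mul_eq_one hWV]

end LeftInverse

theorem conjTranspose_mul_conjTranspose_mul_mul {R l n k : Type*} [NonUnitalSemiring R] [StarRing R]
    [Fintype l] [Fintype n] (S : Matrix l n R) (V : Matrix n k R) :
    Vᴴ * Sᴴ * S * V = (S * V)ᴴ * (S * V) := by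
  rw [← conjTranspose_mul, Matrix.mul_assoc]

theorem mulE_mulE {p q r : ℕ} (M : Matrix (Fin p) (Fin q) ℂ) (K : Matrix (Fin q) (Fin r) ℂ)
    (v : E r) : mulE M (mulE K v) = mulE (M * K) v :=
  congrArg (WithLp.toLp 2) (mulVec_mulVec v.ofLp M K)

theorem sketched_fAb_stmt7 {N s m : ℕ} (hm : 0 < m)
    (A : Matrix (Fin N) (Fin N) ℂ) (V : Matrix (Fin N) (Fin m) ℂ)
    (v : E N) (H : Matrix (Fin m) (Fin m) ℂ) (h : ℂ)
    (S : Matrix (Fin s) (Fin N) ℂ) (β : ℂ) (b : E N)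
    (harnoldi : A * V = V * H
      + h • outerE v (EuclideanSpace.single (⟨m - 1, by omega⟩ : Fin m) 1))
    (hwhite : (S * V)ᴴ * (S * V) = (1 : Matrix (Fin m) (Fin m) ℂ))
    (hb : b = β • mulE V (EuclideanSpace.single (⟨0, hm⟩ : Fin m) 1)) :
    Vᴴ * Sᴴ * S * A * V = H
      + h • outerE (mulE ((S * V)ᴴ) (mulE S v))
          (EuclideanSpace.single (⟨m - 1, by omega⟩ : Fin m) 1)
    ∧ mulE (Vᴴ * Sᴴ * S) b = β • EuclideanSpace.single (⟨0, hm⟩ : Fin m) 1 := by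
  have hleft : Vᴴ * Sᴴ * S * V = 1 := (conjTranspose_mul_conjTranspose_mul_mul S V).trans hwhite
  rw [mulE_mulE, conjTranspose_mul]
  -- `mulE` and `outerE` agree definitionally with `*ᵥ` and `vecMulVec` up to `WithLp`.
  exact (sketched_fAb_stmt7_general hleft harnoldi (congrArg WithLp.ofLp hb)).imp_right
    (congrArg (WithLp.toLp 2))
end
end

section
/- Let A ∈ ℂ^{N×N}, b ∈ ℂᴺ, t ∈ ℂ, S ∈ ℂ^{s×N}, V ∈ ℂ^{N×m}, and let R ∈ ℂ^{m×m} be invertible. Set W := VR⁻¹. If the matrix (SV)ᴴ(t·SV + SAV) is invertible, then (SW)ᴴ(t·SW + SAW) is invertible and the sketched Galerkin approximant is independent of the choice of basis: W·[(SW)ᴴ(t·SW + SAW)]⁻¹·(SW)ᴴ·Sb = V·[(SV)ᴴ(t·SV + SAV)]⁻¹·(SV)ᴴ·Sb. -/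
open Matrix MeasureTheory

noncomputable section

section BasisChange

variable {α k l n p s : Type*} [CommRing α]

theorem mul_mul_inv_mul_mul_cancel [Fintype k] [DecidableEq k] {P Q : Matrix k k α}
    (hP : IsUnit P) (hQ : IsUnit Q) (V : Matrix n k α) (G : Matrix k k α) (L : Matrix k p α) :
    V * Q * (P * G * Q)⁻¹ * (P * L) = V * G⁻¹ * L := by
  have hP_det : IsUnit P.det := P.isUnit_iff_isUnit_det.mp hP
  have hQ_det : IsUnit Q.det := Q.isUnit_iff_isUnit_det.mp hQ
  calc V * Q * (P * G * Q)⁻¹ * (P * L)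
      = V * (Q * (Q⁻¹ * (G⁻¹ * (P⁻¹ * (P * L))))) := by
        simp only [Matrix.mul_inv_rev, Matrix.mul_assoc]
    _ = V * (G⁻¹ * L) := by
        rw [mul_nonsing_inv_cancel_left _ _ hQ_det, nonsing_inv_mul_cancel_left _ _ hP_det]
    _ = V * G⁻¹ * L := (Matrix.mul_assoc _ _ _).symm

variable [StarRing α] [Fintype n] [Fintype s]

/-- The matrix `(SV)ᴴ(t·SV + SAV)` of the sketched Galerkin condition for `(tI + A)x = b`, in the
coordinates `y` of `x = Vy`. -/
def sketchedGalerkinMatrix (A : Matrix n n α) (t : α) (S : Matrix s n α) (V : Matrix n k α) :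
    Matrix k k α :=
  (S * V)ᴴ * (t • (S * V) + S * A * V)

/-- The matrix sending `b` to the sketched Galerkin approximant `x̂(t)`. It has this meaning when
`sketchedGalerkinMatrix A t S V` is invertible, and is `0` otherwise. -/
def sketchedGalerkinSolution [Fintype k] [DecidableEq k] (A : Matrix n n α) (t : α)
    (S : Matrix s n α) (V : Matrix n k α) : Matrix n n α :=
  V * (sketchedGalerkinMatrix A t S V)⁻¹ * (S * V)ᴴ * S

variable (A : Matrix n n α) (t : α) (S : Matrix s n α) (V : Matrix n k α) [Fintype k]

theorem sketchedGalerkinMatrix_mul_right (Q : Matrix k l α) :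
    sketchedGalerkinMatrix A t S (V * Q) = Qᴴ * sketchedGalerkinMatrix A t S V * Q := by
  simp only [sketchedGalerkinMatrix, conjTranspose_mul, Matrix.mul_assoc, Matrix.mul_add,
    Matrix.add_mul, Matrix.smul_mul, Matrix.mul_smul]

variable [DecidableEq k]

theorem isUnit_sketchedGalerkinMatrix_mul_right_iff {Q : Matrix k k α} (hQ : IsUnit Q) :
    IsUnit (sketchedGalerkinMatrix A t S (V * Q)) ↔ IsUnit (sketchedGalerkinMatrix A t S V) := by
  have hQ_adjoint : IsUnit Qᴴ := Q.isUnit_conjTranspose.mpr hQ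
  rw [sketchedGalerkinMatrix_mul_right, hQ.mul_right_iff, hQ_adjoint.mul_left_iff]

theorem sketchedGalerkinSolution_mul_right {Q : Matrix k k α} (hQ : IsUnit Q) :
    sketchedGalerkinSolution A t S (V * Q) = sketchedGalerkinSolution A t S V := by
  have hQ_adjoint : IsUnit Qᴴ := Q.isUnit_conjTranspose.mpr hQ
  have h_adjoint : (S * (V * Q))ᴴ = Qᴴ * (S * V)ᴴ := by
    rw [← Matrix.mul_assoc, conjTranspose_mul]
  rw [sketchedGalerkinSolution, sketchedGalerkinMatrix_mul_right, h_adjoint,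
    mul_mul_inv_mul_mul_cancel hQ_adjoint hQ, sketchedGalerkinSolution]

theorem sketched_fAb_stmt9_general {R : Matrix k k α} (hR : IsUnit R)
    (hinv : IsUnit (sketchedGalerkinMatrix A t S V)) :
    IsUnit (sketchedGalerkinMatrix A t S (V * R⁻¹)) ∧
      sketchedGalerkinSolution A t S (V * R⁻¹) = sketchedGalerkinSolution A t S V := by
  have hR_inv : IsUnit R⁻¹ := isUnit_nonsing_inv_iff.mpr hR
  exact ⟨(isUnit_sketchedGalerkinMatrix_mul_right_iff A t S V hR_inv).mpr hinv,
    sketchedGalerkinSolution_mul_right A t S V hR_inv⟩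

end BasisChange

/-- The sketched Galerkin (sketched FOM) approximant is independent of the choice of
Krylov basis: replacing `V` by `W = VR⁻¹` with `R` invertible leaves the approximant
unchanged. -/
theorem sketched_fAb_stmt9 {N s m : ℕ}
    (A : Matrix (Fin N) (Fin N) ℂ) (b : E N) (t : ℂ)
    (S : Matrix (Fin s) (Fin N) ℂ) (V : Matrix (Fin N) (Fin m) ℂ)
    (R : Matrix (Fin m) (Fin m) ℂ) (hR : IsUnit R)
    (hinv : IsUnit ((S * V)ᴴ * (t • (S * V) + S * A * V))) :
    IsUnit ((S * (V * R⁻¹))ᴴ * (t • (S * (V * R⁻¹)) + S * A * (V * R⁻¹)))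
    ∧ mulE ((V * R⁻¹)
          * ((S * (V * R⁻¹))ᴴ * (t • (S * (V * R⁻¹)) + S * A * (V * R⁻¹)))⁻¹
          * (S * (V * R⁻¹))ᴴ * S) b
      = mulE (V * ((S * V)ᴴ * (t • (S * V) + S * A * V))⁻¹ * (S * V)ᴴ * S) b := by
  obtain ⟨h_unit, h_solution⟩ := sketched_fAb_stmt9_general A t S V hR hinv
  exact ⟨h_unit, congrArg (mulE · b) h_solution⟩
end
end

section
/- Let A ∈ ℂ^{N×N} with δ := min{Re(vᴴAv) : ‖v‖ = 1} > 0, let b ∈ ℂᴺ, t ≥ 0, and let x_m ∈ 𝒦_m(A,b) minimize ‖b − (tI+A)x‖ over x ∈ 𝒦_m(A,b) (the GMRES approximant for the shifted system). Then ‖b − (tI+A)x_m‖ ≤ ‖b‖·(sin β_t)^m, where cos β_t = (t+δ)/‖tI+A‖ and sin β_t = √(1 − cos²β_t). -/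
/-!
Put `B = tI + A`, `d = t + δ`. Since `Re⟨v, Bv⟩ ≥ d‖v‖²`, expanding `‖v - αBv‖²` and choosing
`α = d / ‖B‖²` gives `‖I - αB‖ ≤ sin β_t`. The `m`-th Richardson iterate `α ∑_{i<m} (I - αB)ⁱ b`
lies in the Krylov space and, by the geometric sum formula, has residual `(I - αB)ᵐ b`, of norm at
most `‖b‖ (sin β_t)ᵐ`; the GMRES residual is no larger.
-/

open Matrix MeasureTheory

noncomputable section

section Krylov

variable {R M : Type*} [CommSemiring R] [AddCommMonoid M] [Module R M]

/-- The `m`-th Krylov subspace `span {b, T b, …, T ^ (m - 1) b}` of an endomorphism `T`,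
generalizing `Krylov` from matrices to endomorphisms of modules. -/
def krylovSubspace (T : Module.End R M) (b : M) (m : ℕ) : Submodule R M :=
  Submodule.span R {v | ∃ j < m, v = (T ^ j) b}

theorem pow_apply_mem_krylovSubspace (T : Module.End R M) (b : M) {j m : ℕ} (hj : j < m) :
    (T ^ j) b ∈ krylovSubspace T b m :=
  Submodule.subset_span ⟨j, hj, rfl⟩

theorem aeval_apply_mem_krylovSubspace (T : Module.End R M) (b : M) {p : Polynomial R} {m : ℕ}
    (hp : p.natDegree < m) : Polynomial.aeval T p b ∈ krylovSubspace T b m := by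
  rw [Polynomial.aeval_eq_sum_range' hp, LinearMap.sum_apply]
  exact Submodule.sum_mem _ fun j hj ↦
    Submodule.smul_mem _ _ (pow_apply_mem_krylovSubspace T b (Finset.mem_range.mp hj))

theorem krylovSubspace_smul_one_add_smul_le (T : Module.End R M) (b : M) (c u : R) (m : ℕ) :
    krylovSubspace (c • 1 + u • T) b m ≤ krylovSubspace T b m := by
  refine Submodule.span_le.mpr ?_
  rintro _ ⟨j, hj, rfl⟩
  let p : Polynomial R := Polynomial.C u * Polynomial.X + Polynomial.C c
  have hp : (p ^ j).natDegree < m :=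
    (Polynomial.natDegree_pow_le_of_le j Polynomial.natDegree_linear_le).trans_lt (by simpa)
  have h_aeval : Polynomial.aeval T (p ^ j) = (c • 1 + u • T) ^ j := by
    simp [p, Algebra.algebraMap_eq_smul_one, add_comm]
  exact h_aeval ▸ aeval_apply_mem_krylovSubspace T b hp

end Krylov

section Richardson

variable {R M : Type*} [CommRing R] [AddCommGroup M] [Module R M]

/-- The `m`-th iterate of the Richardson iteration `x ↦ x + α • (b - T x)` for the equation
`T x = b`, started at `0` and written in closed form as a truncated Neumann series. -/
def richardsonIterate (T : Module.End R M) (α : R) (b : M) (m : ℕ) : M :=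
  α • ∑ i ∈ Finset.range m, ((1 - α • T) ^ i) b

theorem richardsonIterate_mem_krylovSubspace (T : Module.End R M) (α : R) (b : M) (m : ℕ) :
    richardsonIterate T α b m ∈ krylovSubspace T b m := by
  refine Submodule.smul_mem _ _ (Submodule.sum_mem _ fun i hi ↦ ?_)
  have h_affine : 1 - α • T = (1 : R) • 1 + (-α) • T := by module
  rw [h_affine]
  exact krylovSubspace_smul_one_add_smul_le T b 1 (-α) m
    (pow_apply_mem_krylovSubspace _ b (Finset.mem_range.mp hi))

theorem sub_apply_richardsonIterate (T : Module.End R M) (α : R) (b : M) (m : ℕ) :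
    b - T (richardsonIterate T α b m) = ((1 - α • T) ^ m) b := by
  have h_geom : α • T (∑ i ∈ Finset.range m, ((1 - α • T) ^ i) b) = b - ((1 - α • T) ^ m) b := by
    simpa using LinearMap.congr_fun (mul_neg_geom_sum (1 - α • T) m) b
  rw [richardsonIterate, map_smul, h_geom, sub_sub_cancel]

end Richardson

theorem norm_pow_apply_le_of_norm_le {𝕜 F : Type*} [NontriviallyNormedField 𝕜]
    [SeminormedAddCommGroup F] [NormedSpace 𝕜 F] {T : F →L[𝕜] F} {q : ℝ} (hT : ‖T‖ ≤ q)
    (m : ℕ) (x : F) : ‖(T ^ m) x‖ ≤ q ^ m * ‖x‖ := by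
  rcases m.eq_zero_or_pos with rfl | hm
  · simp
  · have h_pow : ‖T ^ m‖ ≤ q ^ m :=
      (norm_pow_le' T hm).trans (pow_le_pow_left₀ (norm_nonneg T) hT m)
    exact (T ^ m).le_of_opNorm_le h_pow x

section InnerProductSpace

variable {𝕜 H : Type*} [RCLike 𝕜] [NormedAddCommGroup H] [InnerProductSpace 𝕜 H]

theorem mul_norm_sq_le_reApplyInnerSelf {T : H →L[𝕜] H} {δ : ℝ}
    (hT : ∀ v, ‖v‖ = 1 → δ ≤ T.reApplyInnerSelf v) (x : H) :
    δ * ‖x‖ ^ 2 ≤ T.reApplyInnerSelf x := by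
  rcases eq_or_ne x 0 with rfl | hx
  · simp [ContinuousLinearMap.reApplyInnerSelf_apply]
  · have h_unit := hT _ (norm_smul_inv_norm (𝕜 := 𝕜) hx)
    rw [T.reApplyInnerSelf_smul, norm_inv, RCLike.norm_ofReal, abs_norm, inv_pow,
      inv_mul_eq_div] at h_unit
    exact (le_div_iff₀ (by positivity)).mp h_unit

theorem reApplyInnerSelf_smul_one_add (T : H →L[𝕜] H) (c : 𝕜) (x : H) :
    (c • 1 + T).reApplyInnerSelf x = RCLike.re c * ‖x‖ ^ 2 + T.reApplyInnerSelf x := by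
  simp only [ContinuousLinearMap.reApplyInnerSelf_apply, _root_.add_apply, _root_.smul_apply,
    one_apply_eq_self, inner_add_left, inner_smul_left, map_add, inner_self_eq_norm_sq_to_K,
    ← RCLike.ofReal_pow, RCLike.re_mul_ofReal, RCLike.conj_re]

theorem norm_sub_smul_apply_sq (T : H →L[𝕜] H) (α : ℝ) (x : H) :
    ‖x - (α : 𝕜) • T x‖ ^ 2 = ‖x‖ ^ 2 - 2 * α * T.reApplyInnerSelf x + α ^ 2 * ‖T x‖ ^ 2 := by
  rw [norm_sub_sq (𝕜 := 𝕜), inner_smul_right, RCLike.re_ofReal_mul, inner_re_symm,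
    ← T.reApplyInnerSelf_apply, norm_smul, RCLike.norm_ofReal, mul_pow, sq_abs, ← mul_assoc]

theorem norm_one_sub_smul_le_sqrt {T : H →L[𝕜] H} {d : ℝ} (hd : 0 ≤ d)
    (hT : ∀ x, d * ‖x‖ ^ 2 ≤ T.reApplyInnerSelf x) :
    ‖1 - ((d / ‖T‖ ^ 2 : ℝ) : 𝕜) • T‖ ≤ √(1 - (d / ‖T‖) ^ 2) := by
  set α : ℝ := d / ‖T‖ ^ 2 with hα
  refine ContinuousLinearMap.opNorm_le_bound _ (Real.sqrt_nonneg _) fun x ↦ ?_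
  have h_norm : ‖T x‖ ≤ ‖T‖ * ‖x‖ := T.le_opNorm x
  have h_choice : 1 - 2 * α * d + α ^ 2 * ‖T‖ ^ 2 = 1 - (d / ‖T‖) ^ 2 := by
    rcases eq_or_ne ‖T‖ 0 with h | h
    · simp [hα, h]
    · rw [hα]
      field_simp
      ring
  have h_sq : ‖x - (α : 𝕜) • T x‖ ^ 2 ≤ (1 - (d / ‖T‖) ^ 2) * ‖x‖ ^ 2 :=
    calc ‖x - (α : 𝕜) • T x‖ ^ 2
        = ‖x‖ ^ 2 - 2 * α * T.reApplyInnerSelf x + α ^ 2 * ‖T x‖ ^ 2 :=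
          norm_sub_smul_apply_sq T α x
      _ ≤ ‖x‖ ^ 2 - 2 * α * (d * ‖x‖ ^ 2) + α ^ 2 * (‖T‖ * ‖x‖) ^ 2 := by
          gcongr
          exact hT x
      _ = (1 - 2 * α * d + α ^ 2 * ‖T‖ ^ 2) * ‖x‖ ^ 2 := by ring
      _ = (1 - (d / ‖T‖) ^ 2) * ‖x‖ ^ 2 := by rw [h_choice]
  calc ‖(1 - (α : 𝕜) • T) x‖ ≤ √((1 - (d / ‖T‖) ^ 2) * ‖x‖ ^ 2) := Real.le_sqrt_of_sq_le h_sq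
    _ = √(1 - (d / ‖T‖) ^ 2) * ‖x‖ := by
        rw [Real.sqrt_mul' _ (sq_nonneg _), Real.sqrt_sq (norm_nonneg x)]

theorem exists_mem_krylovSubspace_norm_sub_apply_le {T : H →L[𝕜] H} {d : ℝ} (hd : 0 ≤ d)
    (hT : ∀ x, d * ‖x‖ ^ 2 ≤ T.reApplyInnerSelf x) (b : H) (m : ℕ) :
    ∃ x ∈ krylovSubspace (T : H →ₗ[𝕜] H) b m,
      ‖b - T x‖ ≤ ‖b‖ * √(1 - (d / ‖T‖) ^ 2) ^ m := by
  set α : 𝕜 := ((d / ‖T‖ ^ 2 : ℝ) : 𝕜)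
  refine ⟨richardsonIterate (T : H →ₗ[𝕜] H) α b m,
    richardsonIterate_mem_krylovSubspace _ α b m, ?_⟩
  have h_residual : b - T (richardsonIterate (T : H →ₗ[𝕜] H) α b m) = ((1 - α • T) ^ m) b :=
    (sub_apply_richardsonIterate (T : H →ₗ[𝕜] H) α b m).trans
      (LinearMap.congr_fun (ContinuousLinearMap.toLinearMap_pow (1 - α • T) m).symm b)
  rw [h_residual, mul_comm]
  exact norm_pow_apply_le_of_norm_le (norm_one_sub_smul_le_sqrt hd hT) m b

theorem sketched_fAb_stmt13_general {T : H →L[𝕜] H} {δ : ℝ} {c : 𝕜} {b xm : H} {m : ℕ}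
    (hT : ∀ v, ‖v‖ = 1 → δ ≤ T.reApplyInnerSelf v) (hc : 0 ≤ RCLike.re c + δ)
    (hmin : IsMinOn (fun x ↦ ‖b - (c • 1 + T) x‖) (krylovSubspace (T : H →ₗ[𝕜] H) b m) xm) :
    ‖b - (c • 1 + T) xm‖ ≤ ‖b‖ * √(1 - ((RCLike.re c + δ) / ‖c • 1 + T‖) ^ 2) ^ m := by
  have h_shift (x : H) : (RCLike.re c + δ) * ‖x‖ ^ 2 ≤ (c • 1 + T).reApplyInnerSelf x := by
    rw [reApplyInnerSelf_smul_one_add, add_mul]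
    exact add_le_add_right (mul_norm_sq_le_reApplyInnerSelf hT x) _
  obtain ⟨x, hx, hx_le⟩ := exists_mem_krylovSubspace_norm_sub_apply_le hc h_shift b m
  have h_mem : x ∈ krylovSubspace (T : H →ₗ[𝕜] H) b m :=
    krylovSubspace_smul_one_add_smul_le _ b c 1 m (by simpa using hx)
  exact (isMinOn_iff.mp hmin x h_mem).trans hx_le

end InnerProductSpace

section Matrix

variable {N : ℕ}

theorem mulE_eq_toEuclideanCLM (A : Matrix (Fin N) (Fin N) ℂ) (v : E N) :
    mulE A v = toEuclideanCLM (𝕜 := ℂ) A v :=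
  rfl

theorem opNorm_eq_norm_toEuclideanCLM (A : Matrix (Fin N) (Fin N) ℂ) :
    opNorm A = ‖toEuclideanCLM (𝕜 := ℂ) A‖ :=
  rfl

theorem Krylov_eq_krylovSubspace (A : Matrix (Fin N) (Fin N) ℂ) (b : E N) (m : ℕ) :
    Krylov A b m = krylovSubspace (toEuclideanCLM (𝕜 := ℂ) A : E N →ₗ[ℂ] E N) b m := by
  have h_pow (j : ℕ) (v : E N) :
      mulE (A ^ j) v = ((toEuclideanCLM (𝕜 := ℂ) A : E N →ₗ[ℂ] E N) ^ j) v := by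
    rw [mulE_eq_toEuclideanCLM, map_pow, ← ContinuousLinearMap.toLinearMap_pow,
      ContinuousLinearMap.coe_coe]
  simp only [Krylov, krylovSubspace, h_pow]

end Matrix

/-- Elman-type GMRES convergence bound for the shifted system `(tI+A)x = b`:
if `δ = min{Re(vᴴAv) : ‖v‖ = 1} > 0` and `x_m ∈ 𝒦_m(A,b)` minimizes the residual
norm over the Krylov space, then `‖b − (tI+A)x_m‖ ≤ ‖b‖ (sin β_t)^m` where
`cos β_t = (t+δ)/‖tI+A‖`. -/
theorem sketched_fAb_stmt13 {N m : ℕ} (A : Matrix (Fin N) (Fin N) ℂ) (b : E N) (δ : ℝ)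
    (hδ : IsLeast {r : ℝ | ∃ v : E N, ‖v‖ = 1 ∧ r = (inner ℂ v (mulE A v) : ℂ).re} δ)
    (hδpos : 0 < δ) (t : ℝ) (ht : 0 ≤ t) (xm : E N)
    (hmem : xm ∈ Krylov A b m)
    (hmin : ∀ x ∈ Krylov A b m,
      ‖b - mulE ((t : ℂ) • (1 : Matrix (Fin N) (Fin N) ℂ) + A) xm‖
        ≤ ‖b - mulE ((t : ℂ) • (1 : Matrix (Fin N) (Fin N) ℂ) + A) x‖) :
    ‖b - mulE ((t : ℂ) • (1 : Matrix (Fin N) (Fin N) ℂ) + A) xm‖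
      ≤ ‖b‖ * Real.sqrt (1 -
          ((t + δ) / opNorm ((t : ℂ) • (1 : Matrix (Fin N) (Fin N) ℂ) + A)) ^ 2) ^ m := by
  simp only [mulE_eq_toEuclideanCLM, opNorm_eq_norm_toEuclideanCLM, Krylov_eq_krylovSubspace,
    map_add, map_smul, map_one] at hδ hmin ⊢
  exact sketched_fAb_stmt13_general (c := (t : ℂ))
    (fun v hv ↦ (hδ.2 ⟨v, hv, rfl⟩).trans_eq (inner_re_symm (𝕜 := ℂ) _ _))
    (add_nonneg ht hδpos.le) hmin
end
end
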